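/- arXiv:0804.1882 — 9 statements merged into one kernel-verified Lean document; each statement's English description precedes it below -/
import Mathlib

section
/- Lemma 1 (reformulation in scale-invariant variables): Let λ, μ, ρ, p, p_T, q, m_g be differentiable functions on (0,∞) satisfying the Einstein equations (E1) and (E2), the Tolman–Oppenheimer–Volkov equation (TOV), and the relation e^{−2λ(r)} = 1 − 2m_g(r)/r + q(r)²/r². Define x(r) = 1 − e^{−2λ(r)}, y(r) = 8πr²p(r), z(r) = q(r)²/r², and for a function f let ḟ denote (r/2) df/dr (the derivative with respect to β = 2 log r). Then for all r > 0 with x(r) < 1: 8πr²ρ(r) = 2ẋ + x − z, 8πr²p(r) = y, and 8πr²p_T(r) = ((x + y − z)/(2(1−x)))ẋ + ẏ − ż − z + (x + y − z)²/(4(1−x)). -/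
noncomputable section

open Real

/-- The variable `x(r) = 1 − e^{−2λ(r)}`. -/
def xVar (lam : ℝ → ℝ) (r : ℝ) : ℝ := 1 - Real.exp (-2 * lam r)

/-- The variable `y(r) = 8πr²p(r)`. -/
def yVar (p : ℝ → ℝ) (r : ℝ) : ℝ := 8 * π * r ^ 2 * p r

/-- The variable `z(r) = q(r)²/r²`. -/
def zVar (q : ℝ → ℝ) (r : ℝ) : ℝ := (q r) ^ 2 / r ^ 2

/-- The derivative with respect to `β = 2 log r`: `ḟ(r) = (r/2) f'(r)`. -/
def betaDot (f : ℝ → ℝ) (r : ℝ) : ℝ := (r / 2) * deriv f r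

/-!
In terms of `β = 2 log r`, a power `r ^ n` satisfies `(r ^ n)˙ = (n / 2) r ^ n`, so `ẏ` and `ż` are
`4πr³p' + y` and `qq'/r - z`, while `ẋ = rλ'(1 - x)`. Multiplying (E1) by `r²` therefore gives the
formula for `ρ`. The mass relation says `2m_g/r = x + z`, so the gravitational term of (TOV) is
`(x + y - z)/(2r)`, and `4πr³` times (TOV) becomes
`8πr²p_T = ẏ - ż - z + (8πr²ρ + y)(x + y - z)/(4(1 - x))`, where the formula for `ρ` is substituted.
-/

section ScaleInvariant

variable {lam rho p pT q mg f : ℝ → ℝ} {r : ℝ}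

theorem betaDot_zpow_mul (n : ℤ) (hr : r ≠ 0) (hf : DifferentiableAt ℝ f r) :
    betaDot (fun s => s ^ n * f s) r = r ^ n * (betaDot f r + n / 2 * f r) := by
  have hderiv : deriv (fun s => s ^ n * f s) r = n * r ^ (n - 1) * f r + r ^ n * deriv f r :=
    ((hasDerivAt_zpow n r (.inl hr)).mul hf.hasDerivAt).deriv
  rw [betaDot, hderiv, betaDot, zpow_sub_one₀ hr]
  field_simp
  ring

theorem betaDot_xVar (hlam : DifferentiableAt ℝ lam r) :
    betaDot (xVar lam) r = r * deriv lam r * (1 - xVar lam r) := by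
  have hderiv : deriv (xVar lam) r = -(exp (-2 * lam r) * (-2 * deriv lam r)) :=
    ((hlam.hasDerivAt.const_mul (-2)).exp.const_sub 1).deriv
  rw [betaDot, hderiv, xVar]
  ring

theorem betaDot_yVar (hr : r ≠ 0) (hp : DifferentiableAt ℝ p r) :
    betaDot (yVar p) r = 4 * π * r ^ 3 * deriv p r + yVar p r := by
  have hy : yVar p = fun s => s ^ (2 : ℤ) * (8 * π * p s) := by
    funext s
    rw [yVar, zpow_ofNat]
    ring
  rw [yVar, hy, betaDot_zpow_mul 2 hr (hp.const_mul _), betaDot, deriv_const_mul _ hp, zpow_ofNat]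
  push_cast
  ring

theorem betaDot_zVar (hr : r ≠ 0) (hq : DifferentiableAt ℝ q r) :
    betaDot (zVar q) r = q r * deriv q r / r - zVar q r := by
  have hz : zVar q = fun s => s ^ (-2 : ℤ) * q s ^ 2 := by
    funext s
    rw [zVar, zpow_neg, zpow_ofNat, div_eq_inv_mul]
  have hderiv : deriv (fun s => q s ^ 2) r = 2 * q r * deriv q r := by
    simpa using (hq.hasDerivAt.fun_pow 2).deriv
  rw [zVar, hz, betaDot_zpow_mul (-2) hr (hq.fun_pow 2), betaDot, hderiv, zpow_neg, zpow_ofNat]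
  push_cast
  field_simp
  ring

theorem exp_two_mul_eq_inv_one_sub_xVar (lam : ℝ → ℝ) (r : ℝ) :
    exp (2 * lam r) = (1 - xVar lam r)⁻¹ := by
  rw [xVar, sub_sub_cancel, ← exp_neg, neg_mul, neg_neg]

theorem density_eq_of_einstein (hr : r ≠ 0) (hlam : DifferentiableAt ℝ lam r)
    (hE1 : 1 / r ^ 2 + 2 * deriv lam r * exp (-2 * lam r) / r - exp (-2 * lam r) / r ^ 2
      = 8 * π * rho r + q r ^ 2 / r ^ 4) :
    8 * π * r ^ 2 * rho r = 2 * betaDot (xVar lam) r + xVar lam r - zVar q r := by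
  rw [betaDot_xVar hlam, xVar, zVar]
  calc 8 * π * r ^ 2 * rho r
      = r ^ 2 * (8 * π * rho r + q r ^ 2 / r ^ 4) - q r ^ 2 / r ^ 2 := by
        field_simp
        ring
    _ = _ := by
        rw [← hE1]
        field_simp
        ring

theorem gravitational_term_eq (hr : r ≠ 0)
    (hrel : exp (-2 * lam r) = 1 - 2 * mg r / r + q r ^ 2 / r ^ 2) :
    mg r / r ^ 2 + 4 * π * r * p r - q r ^ 2 / r ^ 3
      = (xVar lam r + yVar p r - zVar q r) / (2 * r) := by
  rw [xVar, yVar, zVar, hrel]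
  field_simp
  ring

theorem tangential_pressure_eq_of_tov (hr : r ≠ 0)
    (hp : DifferentiableAt ℝ p r) (hq : DifferentiableAt ℝ q r)
    (hTOV : deriv p r = q r * deriv q r / (4 * π * r ^ 4) + (2 / r) * (pT r - p r)
      - (rho r + p r) * exp (2 * lam r)
          * (mg r / r ^ 2 + 4 * π * r * p r - q r ^ 2 / r ^ 3))
    (hrel : exp (-2 * lam r) = 1 - 2 * mg r / r + q r ^ 2 / r ^ 2) :
    8 * π * r ^ 2 * pT r = betaDot (yVar p) r - betaDot (zVar q) r - zVar q r
      + (8 * π * r ^ 2 * rho r + yVar p r) * (xVar lam r + yVar p r - zVar q r)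
          / (4 * (1 - xVar lam r)) := by
  rw [gravitational_term_eq hr hrel, exp_two_mul_eq_inv_one_sub_xVar] at hTOV
  rw [betaDot_yVar hr hp, betaDot_zVar hr hq, hTOV]
  generalize xVar lam r + yVar p r - zVar q r = w
  rw [yVar]
  field_simp
  ring

theorem scale_invariant_reformulation_general (hr : r ≠ 0)
    (hlam : DifferentiableAt ℝ lam r) (hp : DifferentiableAt ℝ p r) (hq : DifferentiableAt ℝ q r)
    (hE1 : 1 / r ^ 2 + 2 * deriv lam r * exp (-2 * lam r) / r - exp (-2 * lam r) / r ^ 2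
      = 8 * π * rho r + q r ^ 2 / r ^ 4)
    (hTOV : deriv p r = q r * deriv q r / (4 * π * r ^ 4) + (2 / r) * (pT r - p r)
      - (rho r + p r) * exp (2 * lam r)
          * (mg r / r ^ 2 + 4 * π * r * p r - q r ^ 2 / r ^ 3))
    (hrel : exp (-2 * lam r) = 1 - 2 * mg r / r + q r ^ 2 / r ^ 2) :
    8 * π * r ^ 2 * rho r = 2 * betaDot (xVar lam) r + xVar lam r - zVar q r ∧
    8 * π * r ^ 2 * p r = yVar p r ∧
    8 * π * r ^ 2 * pT r
      = (xVar lam r + yVar p r - zVar q r) / (2 * (1 - xVar lam r)) * betaDot (xVar lam) r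
        + betaDot (yVar p) r - betaDot (zVar q) r - zVar q r
        + (xVar lam r + yVar p r - zVar q r) ^ 2 / (4 * (1 - xVar lam r)) := by
  have hdensity := density_eq_of_einstein hr hlam hE1
  refine ⟨hdensity, rfl, ?_⟩
  rw [tangential_pressure_eq_of_tov hr hp hq hTOV hrel, hdensity]
  generalize 1 - xVar lam r = d
  ring

end ScaleInvariant

/-- **Lemma 1** (reformulation in scale-invariant variables): if `λ, μ, ρ, p,
p_T, q, m_g` are differentiable on `(0,∞)` and satisfy the Einstein equations
(E1), (E2), the TOV equation and `e^{−2λ} = 1 − 2m_g/r + q²/r²`, then in the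
variables `x = 1 − e^{−2λ}`, `y = 8πr²p`, `z = q²/r²` one has
`8πr²ρ = 2ẋ + x − z`, `8πr²p = y` and
`8πr²p_T = ((x+y−z)/(2(1−x)))ẋ + ẏ − ż − z + (x+y−z)²/(4(1−x))`. -/
theorem scale_invariant_reformulation
    (lam mu rho p pT q mg : ℝ → ℝ)
    (hlam : ∀ r > 0, DifferentiableAt ℝ lam r)
    (hmu : ∀ r > 0, DifferentiableAt ℝ mu r)
    (hrho : ∀ r > 0, DifferentiableAt ℝ rho r)
    (hp : ∀ r > 0, DifferentiableAt ℝ p r)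
    (hpT : ∀ r > 0, DifferentiableAt ℝ pT r)
    (hq : ∀ r > 0, DifferentiableAt ℝ q r)
    (hmg : ∀ r > 0, DifferentiableAt ℝ mg r)
    (hE1 : ∀ r > 0,
      1 / r ^ 2 + 2 * deriv lam r * Real.exp (-2 * lam r) / r
          - Real.exp (-2 * lam r) / r ^ 2
        = 8 * π * rho r + (q r) ^ 2 / r ^ 4)
    (hE2 : ∀ r > 0,
      1 / r ^ 2 - 2 * deriv mu r * Real.exp (-2 * lam r) / r
          - Real.exp (-2 * lam r) / r ^ 2
        = -(8 * π * p r) + (q r) ^ 2 / r ^ 4)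
    (hTOV : ∀ r > 0,
      deriv p r =
        q r * deriv q r / (4 * π * r ^ 4) + (2 / r) * (pT r - p r)
          - (rho r + p r) * Real.exp (2 * lam r)
              * (mg r / r ^ 2 + 4 * π * r * p r - (q r) ^ 2 / r ^ 3))
    (hrel : ∀ r > 0,
      Real.exp (-2 * lam r) = 1 - 2 * mg r / r + (q r) ^ 2 / r ^ 2) :
    ∀ r > 0, xVar lam r < 1 →
      (8 * π * r ^ 2 * rho r
          = 2 * betaDot (xVar lam) r + xVar lam r - zVar q r) ∧
      (8 * π * r ^ 2 * p r = yVar p r) ∧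
      (8 * π * r ^ 2 * pT r
          = (xVar lam r + yVar p r - zVar q r) / (2 * (1 - xVar lam r))
                * betaDot (xVar lam) r
            + betaDot (yVar p) r - betaDot (zVar q) r - zVar q r
            + (xVar lam r + yVar p r - zVar q r) ^ 2
                / (4 * (1 - xVar lam r))) := by
  intro r hr _
  exact scale_invariant_reformulation_general hr.ne' (hlam r hr) (hp r hr) (hq r hr)
    (hE1 r hr) (hTOV r hr) (hrel r hr)
end
end

section
/- Optimization lemma: for all real numbers x and s with 0 ≤ x ≤ 1, s ≥ −1, and 3x² − 2x + s² + 2s ≤ 0, one has (3(1 − x) + 1 + s)² ≤ 16(1 − x). Moreover, if 0 ≤ x < 1, then equality holds if and only if x = 0 and s = 0. -/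
/-!
Write `α = 3x² - 2x + s² + 2s`. The parabola `(3(1 - x) + 1 + s)² = 16(1 - x)` belongs to the pencil
spanned by the ellipse `α = 0` and the double line `(x + s)² = 0`: the gap between the two sides is
`3(x + s)² - 4α`. Hence the gap is nonnegative on the elliptical disc `α ≤ 0`, and it vanishes only
where the line `x + s = 0` meets the ellipse, namely at `(0, 0)` and `(1, -1)`.
-/

section

variable {R : Type*} [CommRing R]

theorem sixteen_mul_one_sub_sub_sq_eq (x s : R) :
    16 * (1 - x) - (3 * (1 - x) + 1 + s) ^ 2 =
      3 * (x + s) ^ 2 - 4 * (3 * x ^ 2 - 2 * x + s ^ 2 + 2 * s) := by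
  ring

variable [LinearOrder R] [IsStrictOrderedRing R]

theorem ellipse_inter_line_iff {x s : R} :
    3 * x ^ 2 - 2 * x + s ^ 2 + 2 * s = 0 ∧ x + s = 0 ↔ x = 0 ∧ s = 0 ∨ x = 1 ∧ s = -1 := by
  constructor
  · rintro ⟨hα, hline⟩
    obtain rfl : s = -x := eq_neg_of_add_eq_zero_right hline
    have hroots : x * (x - 1) = 0 := by linarith
    rcases mul_eq_zero.mp hroots with rfl | hx
    · simp
    · obtain rfl : x = 1 := sub_eq_zero.mp hx
      simp
  · rintro (⟨rfl, rfl⟩ | ⟨rfl, rfl⟩) <;> norm_num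

theorem sq_le_sixteen_mul_one_sub {x s : R} (hα : 3 * x ^ 2 - 2 * x + s ^ 2 + 2 * s ≤ 0) :
    (3 * (1 - x) + 1 + s) ^ 2 ≤ 16 * (1 - x) := by
  linarith [sixteen_mul_one_sub_sub_sq_eq x s, sq_nonneg (x + s)]

theorem sq_eq_sixteen_mul_one_sub_iff {x s : R} (hα : 3 * x ^ 2 - 2 * x + s ^ 2 + 2 * s ≤ 0) :
    (3 * (1 - x) + 1 + s) ^ 2 = 16 * (1 - x) ↔
      3 * x ^ 2 - 2 * x + s ^ 2 + 2 * s = 0 ∧ x + s = 0 := by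
  have hgap := sixteen_mul_one_sub_sub_sq_eq x s
  constructor
  · intro heq
    have hsq : 0 ≤ (x + s) ^ 2 := sq_nonneg _
    have hline : (x + s) ^ 2 = 0 := by linarith
    exact ⟨by linarith, sq_eq_zero_iff.mp hline⟩
  · rintro ⟨hα₀, hline⟩
    rw [hα₀, hline] at hgap
    linarith

theorem optimization_lemma_general {x s : R} (hα : 3 * x ^ 2 - 2 * x + s ^ 2 + 2 * s ≤ 0) :
    (3 * (1 - x) + 1 + s) ^ 2 ≤ 16 * (1 - x) ∧
    ((3 * (1 - x) + 1 + s) ^ 2 = 16 * (1 - x) ↔ x = 0 ∧ s = 0 ∨ x = 1 ∧ s = -1) :=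
  ⟨sq_le_sixteen_mul_one_sub hα,
    (sq_eq_sixteen_mul_one_sub_iff hα).trans ellipse_inter_line_iff⟩

end

/-- **Optimization lemma**: for all reals `x, s` with `0 ≤ x ≤ 1`, `s ≥ −1`
and `α(x,s) = 3x² − 2x + s² + 2s ≤ 0`, one has
`(3(1 − x) + 1 + s)² ≤ 16(1 − x)`; moreover if `x < 1` then equality holds
if and only if `x = 0` and `s = 0`. -/
theorem optimization_lemma (x s : ℝ) (hx0 : 0 ≤ x) (hx1 : x ≤ 1)
    (hs : -1 ≤ s) (hα : 3 * x ^ 2 - 2 * x + s ^ 2 + 2 * s ≤ 0) :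
    (3 * (1 - x) + 1 + s) ^ 2 ≤ 16 * (1 - x) ∧
    (x < 1 →
      ((3 * (1 - x) + 1 + s) ^ 2 = 16 * (1 - x) ↔ x = 0 ∧ s = 0)) := by
  obtain ⟨hle, heq⟩ := optimization_lemma_general hα
  exact ⟨hle, fun hlt => by simpa only [hlt.ne, false_and, or_false] using heq⟩
end

section
/- Along the upper branch of the constraint curve α = 0, the quantity w equals (3√(1−x) + √(1+3x))²; consequently, for every x ∈ [0,1] one has (3√(1−x) + √(1+3x))² ≤ 16, with equality if and only if x = 0. -/
/-!
With `a = √(1 - x)` and `b = √(1 + 3x)` one has `3a² + b² = 4`, so the Cauchy–Schwarz inequality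
with weights `3` and `1` gives `(3a + b)² ≤ (3 + 1)(3a² + b²) = 16`. The defect is `3(a - b)²`, so
equality forces `1 - x = 1 + 3x`. The formula for `w` comes from `√((1 - x)(1 + 3x)) = ab` by
cancelling `a²`.
-/

theorem weighted_sum_sq_add_mul_sub_sq {R : Type*} [CommRing R] (p q a b : R) :
    (p * a + q * b) ^ 2 + p * q * (a - b) ^ 2 = (p + q) * (p * a ^ 2 + q * b ^ 2) := by
  ring

theorem mul_add_sqrt_mul_sq_div {u : ℝ} (hu : 0 < u) (p v : ℝ) :
    (p * u + √(u * v)) ^ 2 / u = (p * √u + √v) ^ 2 := by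
  have factor : p * u + √(u * v) = √u * (p * √u + √v) := by
    rw [Real.sqrt_mul hu.le]
    linear_combination -p * Real.sq_sqrt hu.le
  rw [factor, mul_pow, Real.sq_sqrt hu.le, mul_div_cancel_left₀ _ hu.ne']

section WeightedSqrt

variable {u v : ℝ}

theorem weighted_sqrt_sum_sq_add_mul_sub_sq (hu : 0 ≤ u) (hv : 0 ≤ v) (p q : ℝ) :
    (p * √u + q * √v) ^ 2 + p * q * (√u - √v) ^ 2 = (p + q) * (p * u + q * v) := by
  rw [weighted_sum_sq_add_mul_sub_sq, Real.sq_sqrt hu, Real.sq_sqrt hv]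

variable {p q : ℝ}

theorem weighted_sqrt_sum_sq_le (hpq : 0 ≤ p * q) (hu : 0 ≤ u) (hv : 0 ≤ v) :
    (p * √u + q * √v) ^ 2 ≤ (p + q) * (p * u + q * v) := by
  rw [← weighted_sqrt_sum_sq_add_mul_sub_sq hu hv]
  exact le_add_of_nonneg_right (mul_nonneg hpq (sq_nonneg _))

theorem weighted_sqrt_sum_sq_eq_iff (hpq : p * q ≠ 0) (hu : 0 ≤ u) (hv : 0 ≤ v) :
    (p * √u + q * √v) ^ 2 = (p + q) * (p * u + q * v) ↔ u = v := by
  rw [← weighted_sqrt_sum_sq_add_mul_sub_sq hu hv, left_eq_add, mul_eq_zero_iff_left hpq,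
    sq_eq_zero_iff, sub_eq_zero, Real.sqrt_inj hu hv]

end WeightedSqrt

theorem upper_branch_value_general (x : ℝ) (hx0 : -(1 / 3) ≤ x) (hx1 : x ≤ 1) :
    (x < 1 →
      (3 * (1 - x) + 1 + (-1 + √((1 - x) * (1 + 3 * x)))) ^ 2 / (1 - x)
        = (3 * √(1 - x) + √(1 + 3 * x)) ^ 2) ∧
    (3 * √(1 - x) + √(1 + 3 * x)) ^ 2 ≤ 16 ∧
    ((3 * √(1 - x) + √(1 + 3 * x)) ^ 2 = 16 ↔ x = 0) := by
  have hu : 0 ≤ 1 - x := by linarith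
  have hv : 0 ≤ 1 + 3 * x := by linarith
  have total : ((3 : ℝ) + 1) * (3 * (1 - x) + 1 * (1 + 3 * x)) = 16 := by ring
  have bound := weighted_sqrt_sum_sq_le (p := 3) (q := 1) (by norm_num) hu hv
  have eq_iff := weighted_sqrt_sum_sq_eq_iff (p := 3) (q := 1) (by norm_num) hu hv
  rw [total, one_mul] at bound eq_iff
  refine ⟨fun hx => ?_, bound, eq_iff.trans ?_⟩
  · rw [add_assoc, add_neg_cancel_left]
    exact mul_add_sqrt_mul_sq_div (sub_pos.mpr hx) 3 (1 + 3 * x)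
  · constructor <;> intro h <;> linarith

/-- Along the upper branch `s = −1 + √((1−x)(1+3x))` of the constraint curve
`α(x,s) = 3x² − 2x + s² + 2s = 0`, the quantity
`w(x,s) = (3(1−x) + 1 + s)²/(1−x)` equals `(3√(1−x) + √(1+3x))²`;
consequently, for every `x ∈ [0,1]` one has `(3√(1−x) + √(1+3x))² ≤ 16`,
with equality if and only if `x = 0`. -/
theorem upper_branch_value (x : ℝ) (hx0 : 0 ≤ x) (hx1 : x ≤ 1) :
    (x < 1 →
      (3 * (1 - x) + 1 + (-1 + Real.sqrt ((1 - x) * (1 + 3 * x)))) ^ 2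
          / (1 - x)
        = (3 * Real.sqrt (1 - x) + Real.sqrt (1 + 3 * x)) ^ 2) ∧
    (3 * Real.sqrt (1 - x) + Real.sqrt (1 + 3 * x)) ^ 2 ≤ 16 ∧
    ((3 * Real.sqrt (1 - x) + Real.sqrt (1 + 3 * x)) ^ 2 = 16 ↔ x = 0) :=
  upper_branch_value_general x (by linarith) hx1
end

section
/- Monotonicity of w along solution curves: let x, y, z : ℝ → ℝ be differentiable at β with x(β) < 1, set s = y − z and w(β) = (3(1 − x(β)) + 1 + s(β))²/(1 − x(β)). Then w'(β) = ((4 − 3x + s)/(1 − x)²)·[(3x − 2 + s)x'(β) + 2(1 − x)(y'(β) − z'(β))]. Consequently, if furthermore 0 ≤ x(β), s(β) ≥ −1, y(β) ≥ 0, and (3x − 2 + s)x'(β) + 2(1 − x)(y'(β) − z'(β)) ≤ −α(x(β), s(β))/2, then w'(β) ≤ −((4 − 3x + s)/(2(1 − x)²))·α(x(β), s(β)); in particular w'(β) < 0 whenever α(x(β), s(β)) > 0. -/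
/-! Write `w = u² / v` with `u = 4 - 3x + s` and `v = 1 - x`. Then `w' = (u / v²) (2 v u' - u v')`,
and after substituting `u' = s' - 3x'` and `v' = -x'` the second factor is exactly the left-hand
side of the matter condition. An upper bound on the latter is therefore an upper bound on `w'` as
soon as `u ≥ 0`. -/

/-- The polynomial `α` whose sign controls the monotonicity of `w`; the matter condition
`p + 2 p_T ≤ ρ` reads `matterForm x s x' s' ≤ -alpha x s / 2`. -/
def alpha (x s : ℝ) : ℝ :=
  3 * x ^ 2 - 2 * x + s ^ 2 + 2 * s

/-- The quantity `w` that is monotone along solution curves, as a function of `x = 2m_λ/r` and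
`s = y - z`. It takes the junk value `0` at `x = 1`. -/
noncomputable def w (x s : ℝ) : ℝ :=
  (3 * (1 - x) + 1 + s) ^ 2 / (1 - x)

/-- The left-hand side of the matter condition, linear in the velocities `x'` and `s' = y' - z'`. -/
def matterForm (x s x' s' : ℝ) : ℝ :=
  (3 * x - 2 + s) * x' + 2 * (1 - x) * s'

theorem hasDerivAt_sq_div {𝕜 : Type*} [NontriviallyNormedField 𝕜] {u v : 𝕜 → 𝕜} {u' v' β : 𝕜}
    (hu : HasDerivAt u u' β) (hv : HasDerivAt v v' β) (hv0 : v β ≠ 0) :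
    HasDerivAt (fun t => u t ^ 2 / v t) (u β / v β ^ 2 * (2 * v β * u' - u β * v')) β := by
  refine ((hu.fun_pow 2).fun_div hv hv0).congr_deriv ?_
  push_cast
  ring

section SolutionCurve

variable {x s : ℝ → ℝ} {x' s' β : ℝ}

theorem hasDerivAt_w (hx : HasDerivAt x x' β) (hs : HasDerivAt s s' β) (hx1 : x β ≠ 1) :
    HasDerivAt (fun t => w (x t) (s t))
      ((4 - 3 * x β + s β) / (1 - x β) ^ 2 * matterForm (x β) (s β) x' s') β := by
  have hv : HasDerivAt (fun t => 1 - x t) (-x') β := hx.const_sub 1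
  have hu : HasDerivAt (fun t => 3 * (1 - x t) + 1 + s t) (3 * -x' + s') β :=
    ((hv.const_mul 3).add_const 1).add hs
  refine (hasDerivAt_sq_div hu hv (sub_ne_zero.mpr hx1.symm)).congr_deriv ?_
  unfold matterForm
  ring

theorem deriv_w_le (hx : HasDerivAt x x' β) (hs : HasDerivAt s s' β) (hx1 : x β ≠ 1)
    (hu : 0 ≤ 4 - 3 * x β + s β)
    (hmatter : matterForm (x β) (s β) x' s' ≤ -alpha (x β) (s β) / 2) :
    deriv (fun t => w (x t) (s t)) β ≤
      -((4 - 3 * x β + s β) / (2 * (1 - x β) ^ 2)) * alpha (x β) (s β) :=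
  calc
    deriv (fun t => w (x t) (s t)) β
        = (4 - 3 * x β + s β) / (1 - x β) ^ 2 * matterForm (x β) (s β) x' s' :=
      (hasDerivAt_w hx hs hx1).deriv
    _ ≤ (4 - 3 * x β + s β) / (1 - x β) ^ 2 * (-alpha (x β) (s β) / 2) := by gcongr
    _ = -((4 - 3 * x β + s β) / (2 * (1 - x β) ^ 2)) * alpha (x β) (s β) := by
      rw [mul_comm 2, ← div_div]
      ring

theorem deriv_w_neg (hx : HasDerivAt x x' β) (hs : HasDerivAt s s' β) (hx1 : x β ≠ 1)
    (hu : 0 < 4 - 3 * x β + s β)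
    (hmatter : matterForm (x β) (s β) x' s' ≤ -alpha (x β) (s β) / 2)
    (hα : 0 < alpha (x β) (s β)) :
    deriv (fun t => w (x t) (s t)) β < 0 := by
  have hv : 0 < (1 - x β) ^ 2 := sq_pos_of_ne_zero (sub_ne_zero.mpr hx1.symm)
  have hfactor : 0 < (4 - 3 * x β + s β) / (2 * (1 - x β) ^ 2) :=
    div_pos hu (mul_pos two_pos hv)
  exact (deriv_w_le hx hs hx1 hu.le hmatter).trans_lt
    (mul_neg_of_neg_of_pos (neg_neg_of_pos hfactor) hα)

theorem w_monotone_general (hx : HasDerivAt x x' β) (hs : HasDerivAt s s' β) (hx1 : x β ≠ 1) :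
    deriv (fun t => w (x t) (s t)) β =
        (4 - 3 * x β + s β) / (1 - x β) ^ 2 * matterForm (x β) (s β) x' s' ∧
      (0 < 4 - 3 * x β + s β →
        matterForm (x β) (s β) x' s' ≤ -alpha (x β) (s β) / 2 →
        deriv (fun t => w (x t) (s t)) β ≤
            -((4 - 3 * x β + s β) / (2 * (1 - x β) ^ 2)) * alpha (x β) (s β) ∧
          (0 < alpha (x β) (s β) → deriv (fun t => w (x t) (s t)) β < 0)) :=
  ⟨(hasDerivAt_w hx hs hx1).deriv, fun hu hmatter =>
    ⟨deriv_w_le hx hs hx1 hu.le hmatter, deriv_w_neg hx hs hx1 hu hmatter⟩⟩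

end SolutionCurve

/-- **Monotonicity of `w` along solution curves**: let `x, y, z` be
differentiable at `β` with `x(β) < 1`, and set `s = y − z`,
`w = (3(1 − x) + 1 + s)²/(1 − x)`. Then
`w' = ((4 − 3x + s)/(1 − x)²)·[(3x − 2 + s)x' + 2(1 − x)(y' − z')]`;
consequently, if `0 ≤ x`, `s ≥ −1`, `y ≥ 0` and
`(3x − 2 + s)x' + 2(1 − x)(y' − z') ≤ −α(x,s)/2` where
`α(x,s) = 3x² − 2x + s² + 2s`, then
`w' ≤ −((4 − 3x + s)/(2(1 − x)²))·α(x,s)`; in particular `w' < 0`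
whenever `α(x,s) > 0`. -/
theorem w_monotone (x y z : ℝ → ℝ) (β : ℝ)
    (hx : DifferentiableAt ℝ x β) (hy : DifferentiableAt ℝ y β)
    (hz : DifferentiableAt ℝ z β) (hx1 : x β < 1) :
    deriv (fun t => (3 * (1 - x t) + 1 + (y t - z t)) ^ 2 / (1 - x t)) β
      = (4 - 3 * x β + (y β - z β)) / (1 - x β) ^ 2 *
          ((3 * x β - 2 + (y β - z β)) * deriv x β
            + 2 * (1 - x β) * (deriv y β - deriv z β)) ∧
    (0 ≤ x β → -1 ≤ y β - z β → 0 ≤ y β →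
      (3 * x β - 2 + (y β - z β)) * deriv x β
          + 2 * (1 - x β) * (deriv y β - deriv z β)
        ≤ -(3 * (x β) ^ 2 - 2 * x β + (y β - z β) ^ 2 + 2 * (y β - z β)) / 2 →
      (deriv (fun t => (3 * (1 - x t) + 1 + (y t - z t)) ^ 2 / (1 - x t)) β
          ≤ -((4 - 3 * x β + (y β - z β)) / (2 * (1 - x β) ^ 2)) *
              (3 * (x β) ^ 2 - 2 * x β + (y β - z β) ^ 2 + 2 * (y β - z β)) ∧
        (0 < 3 * (x β) ^ 2 - 2 * x β + (y β - z β) ^ 2 + 2 * (y β - z β) →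
          deriv (fun t => (3 * (1 - x t) + 1 + (y t - z t)) ^ 2 / (1 - x t)) β
            < 0))) := by
  have h := w_monotone_general hx.hasDerivAt (hy.hasDerivAt.sub hz.hasDerivAt) hx1.ne
  exact ⟨h.1, fun _ hs _ => h.2 (show 0 < 4 - 3 * x β + (y β - z β) by linarith)⟩
end

section
/- Consistency with the horizon: let m, q, r be real numbers with r > 0, m ≥ 0 and q² < r². If √m ≤ √r/3 + √(r/9 + q²/(3r)), then 1 − 2m/r + q²/r² > 0. -/
/-!
The factor `1 - 2m/r + q²/r²` decreases in `m`, so the worst case is the mass saturating the bound.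
There it is the perfect square `(2√r/3 - √(r/9 + q²/(3r)))² / r`, which vanishes only at `q² = r²`.
-/

/-- The Reissner–Nordström metric factor `e^{-2λ}` at area radius `r`, for mass `m` and charge `q`;
it is positive outside the outer horizon. -/
noncomputable def rnMetricFactor (m q r : ℝ) : ℝ :=
  1 - 2 * m / r + q ^ 2 / r ^ 2

/-- The largest gravitational mass that the sharp Buchdahl-type bound
`√m ≤ √r/3 + √(r/9 + q²/(3r))` allows for charge `q` inside radius `r`. -/
noncomputable def buchdahlMass (q r : ℝ) : ℝ :=
  (√r / 3 + √(r / 9 + q ^ 2 / (3 * r))) ^ 2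

section

variable {m q r : ℝ}

theorem rnMetricFactor_antitone (hr : 0 ≤ r) : Antitone fun m ↦ rnMetricFactor m q r := by
  intro m₁ m₂ hm
  simp only [rnMetricFactor]
  gcongr

theorem le_buchdahlMass_iff :
    m ≤ buchdahlMass q r ↔ √m ≤ √r / 3 + √(r / 9 + q ^ 2 / (3 * r)) :=
  (Real.sqrt_le_left (by positivity)).symm

theorem rnMetricFactor_buchdahlMass (hr : 0 < r) :
    rnMetricFactor (buchdahlMass q r) q r =
      (2 * √r / 3 - √(r / 9 + q ^ 2 / (3 * r))) ^ 2 / r := by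
  have sq_sqrt_r : √r ^ 2 = r := Real.sq_sqrt hr.le
  have sq_sqrt_div_nine_add : √(r / 9 + q ^ 2 / (3 * r)) ^ 2 = r / 9 + q ^ 2 / (3 * r) :=
    Real.sq_sqrt (by positivity)
  have charge_eq : q ^ 2 / r ^ 2 = (3 * (r / 9 + q ^ 2 / (3 * r)) - r / 3) / r := by
    field_simp
    ring
  rw [rnMetricFactor, buchdahlMass, charge_eq, eq_div_iff hr.ne', add_mul, sub_mul,
    div_mul_cancel₀ _ hr.ne', div_mul_cancel₀ _ hr.ne']
  linear_combination sq_sqrt_div_nine_add * (-3) - sq_sqrt_r * (2 / 3)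

theorem sqrt_div_nine_add_eq_iff (hr : 0 < r) :
    √(r / 9 + q ^ 2 / (3 * r)) = 2 * √r / 3 ↔ q ^ 2 = r ^ 2 := by
  rw [Real.sqrt_eq_iff_eq_sq (by positivity) (by positivity), div_pow, mul_pow,
    Real.sq_sqrt hr.le]
  field_simp
  constructor <;> intro h <;> linarith

theorem rnMetricFactor_buchdahlMass_pos_iff (hr : 0 < r) :
    0 < rnMetricFactor (buchdahlMass q r) q r ↔ q ^ 2 ≠ r ^ 2 := by
  rw [rnMetricFactor_buchdahlMass hr, div_pos_iff_of_pos_right hr, sq_pos_iff, sub_ne_zero,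
    ne_comm, Ne, sqrt_div_nine_add_eq_iff hr]

end

theorem horizon_consistency_general (m q r : ℝ) (hr : 0 < r) (hq : q ^ 2 ≠ r ^ 2)
    (h : √m ≤ √r / 3 + √(r / 9 + q ^ 2 / (3 * r))) :
    0 < 1 - 2 * m / r + q ^ 2 / r ^ 2 :=
  calc
    0 < rnMetricFactor (buchdahlMass q r) q r := (rnMetricFactor_buchdahlMass_pos_iff hr).mpr hq
    _ ≤ rnMetricFactor m q r := rnMetricFactor_antitone hr.le (le_buchdahlMass_iff.mpr h)

/-- **Consistency with the horizon**: for reals `m, q, r` with `r > 0`,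
`m ≥ 0` and `q² < r²`, the bound `√m ≤ √r/3 + √(r/9 + q²/(3r))` implies
`1 − 2m/r + q²/r² > 0`. -/
theorem horizon_consistency (m q r : ℝ) (hr : 0 < r) (hm : 0 ≤ m)
    (hq : q ^ 2 < r ^ 2)
    (h : Real.sqrt m ≤ Real.sqrt r / 3 + Real.sqrt (r / 9 + q ^ 2 / (3 * r))) :
    0 < 1 - 2 * m / r + q ^ 2 / r ^ 2 :=
  horizon_consistency_general m q r hr hq.ne h
end

section
/- Derivative of w along the curve γ_ε: let ε ∈ (0,1) and let x, s : ℝ → ℝ be differentiable functions of τ with 0 ≤ x(τ) < 1, s(τ) > −1, (3 − 3ε)(1 − x(τ)) + 1 + s(τ) > 0, and satisfying the constraint ((3 − 3ε)(1 − x(τ)) + 1 + s(τ))²/(1 − x(τ)) = (ε√(1 + 3x(τ)) + 4(1 − ε))² for all τ. Then w(τ) := (3(1 − x(τ)) + 1 + s(τ))²/(1 − x(τ)) satisfies w'(τ) = (3ε(4 − 3x + s)/(1 − x))·((√(1 − x) − √(1 + 3x))/√(1 + 3x))·x'(τ). In particular, if x(τ) > 0 and x'(τ) > 0 then w'(τ)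 < 0. -/
/-!
On `γ_ε` both sides of the constraint are squares of nonnegative quantities, so one may take square
roots: `(3 - 3ε)(1 - x) + 1 + s = √(1 - x) (ε√(1 + 3x) + 4(1 - ε))`. Adding `3ε(1 - x)` to both
sides eliminates `s` and gives `√w = ε√(1 + 3x) + 4(1 - ε) + 3ε√(1 - x)`, a function of `x` alone,
whose derivative `(3ε/2) (1/√(1 + 3x) - 1/√(1 - x))` is negative for `0 < ε` and `0 < x < 1`.
-/

open Topology

theorem eq_sqrt_mul_of_sq_div_eq_sq {a b y : ℝ} (ha : 0 ≤ a) (hb : 0 ≤ b) (hy : 0 < y)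
    (h : a ^ 2 / y = b ^ 2) : a = √y * b := by
  have hsq : a ^ 2 = (√y * b) ^ 2 := by
    rw [mul_pow, Real.sq_sqrt hy.le, mul_comm]
    exact (div_eq_iff hy.ne').mp h
  exact (sq_eq_sq₀ ha (by positivity)).mp hsq

/-- The quantity `w` of the Buchdahl-type bound; it has its intended meaning only for `x < 1`. -/
noncomputable def buchdahlW (x s : ℝ) : ℝ :=
  (3 * (1 - x) + 1 + s) ^ 2 / (1 - x)

/-- The right-hand side `ε√(1 + 3x) + 4(1 - ε)` of the equation of `γ_ε`, before squaring. -/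
noncomputable def gammaLevel (ε x : ℝ) : ℝ :=
  ε * √(1 + 3 * x) + 4 * (1 - ε)

/-- The value of `√w` at the point of `γ_ε` with first coordinate `x`. -/
noncomputable def sqrtWOnGamma (ε x : ℝ) : ℝ :=
  gammaLevel ε x + 3 * ε * √(1 - x)

/-- The point `(x, s)` lies on the branch of `γ_ε` with `(3 - 3ε)(1 - x) + 1 + s > 0`, over the
range `-1/3 < x < 1` on which both square roots `√(1 + 3x)` and `√(1 - x)` are differentiable. -/
structure IsOnGamma (ε x s : ℝ) : Prop where
  one_add_three_mul_pos : 0 < 1 + 3 * x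
  lt_one : x < 1
  numerator_pos : 0 < (3 - 3 * ε) * (1 - x) + 1 + s
  constraint : ((3 - 3 * ε) * (1 - x) + 1 + s) ^ 2 / (1 - x) = gammaLevel ε x ^ 2

theorem gammaLevel_nonneg {ε x : ℝ} (hε : ε ≤ 1) (hx : x ≤ 5) : 0 ≤ gammaLevel ε x := by
  have hsqrt : √(1 + 3 * x) ≤ 4 := Real.sqrt_le_iff.mpr ⟨by norm_num, by linarith⟩
  calc 0 ≤ (1 - ε) * (4 - √(1 + 3 * x)) + √(1 + 3 * x) :=
        add_nonneg (mul_nonneg (by linarith) (by linarith)) (Real.sqrt_nonneg _)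
    _ = gammaLevel ε x := by rw [gammaLevel]; ring

theorem hasDerivAt_sqrtWOnGamma (ε : ℝ) {x : ℝ} (hx : 0 < 1 + 3 * x) (hx1 : x < 1) :
    HasDerivAt (sqrtWOnGamma ε) (3 * ε / 2 * (1 / √(1 + 3 * x) - 1 / √(1 - x))) x := by
  have hleft : HasDerivAt (fun y ↦ √(1 + 3 * y)) (3 * 1 / (2 * √(1 + 3 * x))) x :=
    (((hasDerivAt_id' x).const_mul 3).const_add 1).sqrt hx.ne'
  have hright : HasDerivAt (fun y ↦ √(1 - y)) (-1 / (2 * √(1 - x))) x :=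
    ((hasDerivAt_id' x).const_sub 1).sqrt (sub_pos.mpr hx1).ne'
  refine (((hleft.const_mul ε).add_const (4 * (1 - ε))).add
    (hright.const_mul (3 * ε))).congr_deriv ?_
  ring

namespace IsOnGamma

variable {ε x s : ℝ}

theorem numerator_eq_sqrt_mul_sqrtWOnGamma (hε : ε ≤ 1) (h : IsOnGamma ε x s) :
    3 * (1 - x) + 1 + s = √(1 - x) * sqrtWOnGamma ε x := by
  have hx : 0 < 1 - x := sub_pos.mpr h.lt_one
  have hroot : (3 - 3 * ε) * (1 - x) + 1 + s = √(1 - x) * gammaLevel ε x :=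
    eq_sqrt_mul_of_sq_div_eq_sq h.numerator_pos.le
      (gammaLevel_nonneg hε (by linarith [h.lt_one])) hx h.constraint
  rw [sqrtWOnGamma]
  linear_combination hroot - 3 * ε * Real.sq_sqrt hx.le

theorem buchdahlW_eq_sq (hε : ε ≤ 1) (h : IsOnGamma ε x s) :
    buchdahlW x s = sqrtWOnGamma ε x ^ 2 := by
  have hx : 0 < 1 - x := sub_pos.mpr h.lt_one
  rw [buchdahlW, h.numerator_eq_sqrt_mul_sqrtWOnGamma hε, mul_pow, Real.sq_sqrt hx.le,
    mul_div_cancel_left₀ _ hx.ne']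

theorem two_mul_sqrtWOnGamma_mul_deriv (hε : ε ≤ 1) (h : IsOnGamma ε x s) :
    2 * sqrtWOnGamma ε x * (3 * ε / 2 * (1 / √(1 + 3 * x) - 1 / √(1 - x))) =
      3 * ε * (4 - 3 * x + s) / (1 - x) * ((√(1 - x) - √(1 + 3 * x)) / √(1 + 3 * x)) := by
  have hx : 0 < 1 - x := sub_pos.mpr h.lt_one
  have hleft : √(1 + 3 * x) ≠ 0 := (Real.sqrt_pos.mpr h.one_add_three_mul_pos).ne'
  have hright : √(1 - x) ≠ 0 := (Real.sqrt_pos.mpr hx).ne'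
  have hnum : 4 - 3 * x + s = √(1 - x) * sqrtWOnGamma ε x := by
    rw [← h.numerator_eq_sqrt_mul_sqrtWOnGamma hε]
    ring
  calc 2 * sqrtWOnGamma ε x * (3 * ε / 2 * (1 / √(1 + 3 * x) - 1 / √(1 - x)))
      = 3 * ε * (√(1 - x) * sqrtWOnGamma ε x) / √(1 - x) ^ 2 *
          ((√(1 - x) - √(1 + 3 * x)) / √(1 + 3 * x)) := by field_simp
    _ = 3 * ε * (4 - 3 * x + s) / (1 - x) *
          ((√(1 - x) - √(1 + 3 * x)) / √(1 + 3 * x)) := by rw [hnum, Real.sq_sqrt hx.le]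

theorem deriv_factor_neg (hε : 0 < ε) (hx : 0 < x) (h : IsOnGamma ε x s) :
    3 * ε * (4 - 3 * x + s) / (1 - x) * ((√(1 - x) - √(1 + 3 * x)) / √(1 + 3 * x)) < 0 := by
  have hx1 : 0 < 1 - x := sub_pos.mpr h.lt_one
  have hnum : 0 < 4 - 3 * x + s := by linarith [h.numerator_pos, mul_pos hε hx1]
  have hsqrt : √(1 - x) < √(1 + 3 * x) := Real.sqrt_lt_sqrt hx1.le (by linarith)
  exact mul_neg_of_pos_of_neg (by positivity)
    (div_neg_of_neg_of_pos (sub_neg.mpr hsqrt) (Real.sqrt_pos.mpr h.one_add_three_mul_pos))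

end IsOnGamma

theorem w_deriv_along_gamma_eps_general {ε τ x' : ℝ} {x s : ℝ → ℝ} (hε : ε ≤ 1)
    (hx : HasDerivAt x x' τ) (hγ : ∀ᶠ t in 𝓝 τ, IsOnGamma ε (x t) (s t)) :
    HasDerivAt (fun t ↦ buchdahlW (x t) (s t))
        (3 * ε * (4 - 3 * x τ + s τ) / (1 - x τ) *
          ((√(1 - x τ) - √(1 + 3 * x τ)) / √(1 + 3 * x τ)) * x') τ ∧
      (0 < ε → 0 < x τ → 0 < x' → deriv (fun t ↦ buchdahlW (x t) (s t)) τ < 0) := by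
  have hτ : IsOnGamma ε (x τ) (s τ) := hγ.self_of_nhds
  have hsqrtW := (hasDerivAt_sqrtWOnGamma ε hτ.one_add_three_mul_pos hτ.lt_one).comp τ hx
  have hw : HasDerivAt (fun t ↦ buchdahlW (x t) (s t))
      (3 * ε * (4 - 3 * x τ + s τ) / (1 - x τ) *
        ((√(1 - x τ) - √(1 + 3 * x τ)) / √(1 + 3 * x τ)) * x') τ := by
    refine ((hsqrtW.pow 2).congr_of_eventuallyEq
      (hγ.mono fun t ht ↦ ht.buchdahlW_eq_sq hε)).congr_deriv ?_
    rw [← hτ.two_mul_sqrtWOnGamma_mul_deriv hε]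
    simp only [Function.comp_apply]
    ring
  refine ⟨hw, fun hε0 hx0 hx' ↦ ?_⟩
  rw [hw.deriv]
  exact mul_neg_of_neg_of_pos (hτ.deriv_factor_neg hε0 hx0) hx'

/-- **Derivative of `w` along the curve `γ_ε`**: let `ε ∈ (0,1)` and let
`x, s : ℝ → ℝ` be differentiable with `0 ≤ x < 1`, `s > −1`,
`(3 − 3ε)(1 − x) + 1 + s > 0`, satisfying the constraint
`w_ε(x,s) = ((3 − 3ε)(1 − x) + 1 + s)²/(1 − x) = (ε√(1+3x) + 4(1−ε))²`.
Then `w = (3(1 − x) + 1 + s)²/(1 − x)` satisfies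
`w' = (3ε(4 − 3x + s)/(1 − x))·((√(1−x) − √(1+3x))/√(1+3x))·x'`;
in particular `w' < 0` wherever `x > 0` and `x' > 0`. -/
theorem w_deriv_along_gamma_eps (ε : ℝ) (hε0 : 0 < ε) (hε1 : ε < 1)
    (x s : ℝ → ℝ) (hx : Differentiable ℝ x) (hs : Differentiable ℝ s)
    (hx0 : ∀ τ, 0 ≤ x τ) (hx1 : ∀ τ, x τ < 1) (hsb : ∀ τ, -1 < s τ)
    (hpos : ∀ τ, 0 < (3 - 3 * ε) * (1 - x τ) + 1 + s τ)
    (hconstraint : ∀ τ,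
      ((3 - 3 * ε) * (1 - x τ) + 1 + s τ) ^ 2 / (1 - x τ)
        = (ε * Real.sqrt (1 + 3 * x τ) + 4 * (1 - ε)) ^ 2) :
    ∀ τ,
      deriv (fun t => (3 * (1 - x t) + 1 + s t) ^ 2 / (1 - x t)) τ
        = 3 * ε * (4 - 3 * x τ + s τ) / (1 - x τ) *
            ((Real.sqrt (1 - x τ) - Real.sqrt (1 + 3 * x τ))
              / Real.sqrt (1 + 3 * x τ)) * deriv x τ ∧
      (0 < x τ → 0 < deriv x τ →
        deriv (fun t => (3 * (1 - x t) + 1 + s t) ^ 2 / (1 - x t)) τ < 0) := by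
  intro τ
  have hw := w_deriv_along_gamma_eps_general hε1.le (hx τ).hasDerivAt
    (.of_forall fun t ↦ ⟨by linarith [hx0 t], hx1 t, hpos t, hconstraint t⟩)
  exact ⟨hw.1.deriv, hw.2 hε0⟩
end

section
/- Positivity of the tangential pressure term along γ₀: for every real s with −1 < s ≤ 0, setting x = (4 + 3s)/9 + (4/3)√(1/9 − s/3), one has 0 ≤ x < 1 and s + (x + s)²/(4(1 − x)) = s + 4(1/3 + √(1/9 − s/3))² ≥ s + 16/9 > 0. -/
/-!
Put `u = 2/3 - √(1/9 - s/3)`. Then `1 - x = u²` and `3u² + 1 + s = 4u`, which parametrizes the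
level set `(3(1 - x) + 1 + s)² = 16(1 - x)` rationally. Hence `x + s = 4u(1 - u)`, so the factor
`u²` cancels from `(x + s)²/(4(1 - x))` and leaves `4(1 - u)²`, where `1 - u = 1/3 + √(1/9 - s/3)`.
-/

/-- The `x`-coordinate of the point of `γ₀` at height `s`, on the branch with the positive square
root. It lies on `γ₀` for `s ≤ 1/3`; beyond that `Real.sqrt` takes its junk value `0`. -/
noncomputable def gammaZeroX (s : ℝ) : ℝ :=
  (4 + 3 * s) / 9 + (4 / 3) * Real.sqrt (1 / 9 - s / 3)

/-- The signed square root `u` of `1 - x` along `γ₀`, which serves as a rational parameter of the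
curve. It changes sign at `s = -1`, where `x = 1`. -/
noncomputable def gammaZeroRoot (s : ℝ) : ℝ :=
  2 / 3 - Real.sqrt (1 / 9 - s / 3)

/-- The quantity `8πr²p_T` as a function of `x` and `s`, where `p_T` is the tangential pressure.
It is meaningful for `x ≠ 1`. -/
noncomputable def scaledTangentialPressure (x s : ℝ) : ℝ :=
  s + (x + s) ^ 2 / (4 * (1 - x))

theorem scaledTangentialPressure_eq_of_one_sub_eq_sq {x s u : ℝ} (hu : u ≠ 0)
    (hx : 1 - x = u ^ 2) (hs : 3 * u ^ 2 + 1 + s = 4 * u) :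
    scaledTangentialPressure x s = s + 4 * (1 - u) ^ 2 := by
  have hxs : x + s = 4 * u * (1 - u) := by linear_combination hs - hx
  rw [scaledTangentialPressure, hxs, hx]
  field_simp

section GammaZero

variable {s : ℝ}

theorem three_mul_gammaZeroRoot_sq_add_one_add (hs : s ≤ 1 / 3) :
    3 * gammaZeroRoot s ^ 2 + 1 + s = 4 * gammaZeroRoot s := by
  have hsq : Real.sqrt (1 / 9 - s / 3) ^ 2 = 1 / 9 - s / 3 := Real.sq_sqrt (by linarith)
  rw [gammaZeroRoot]
  linear_combination 3 * hsq

theorem one_sub_gammaZeroX (hs : s ≤ 1 / 3) : 1 - gammaZeroX s = gammaZeroRoot s ^ 2 := by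
  have hsq : Real.sqrt (1 / 9 - s / 3) ^ 2 = 1 / 9 - s / 3 := Real.sq_sqrt (by linarith)
  rw [gammaZeroX, gammaZeroRoot]
  linear_combination -hsq

theorem gammaZeroRoot_ne_zero (hs : s ≤ 1 / 3) (hs' : s ≠ -1) : gammaZeroRoot s ≠ 0 := by
  intro hroot
  have hcurve := three_mul_gammaZeroRoot_sq_add_one_add hs
  rw [hroot] at hcurve
  exact hs' (by linarith)

theorem abs_gammaZeroRoot_le_one (hs : -8 ≤ s) : |gammaZeroRoot s| ≤ 1 := by
  have hsqrt_nonneg : 0 ≤ Real.sqrt (1 / 9 - s / 3) := Real.sqrt_nonneg _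
  have hsqrt_le : Real.sqrt (1 / 9 - s / 3) ≤ 5 / 3 :=
    Real.sqrt_le_iff.mpr ⟨by norm_num, by linarith⟩
  rw [gammaZeroRoot, abs_le]
  constructor <;> linarith

theorem gammaZeroX_nonneg (hs : -8 ≤ s) (hs' : s ≤ 1 / 3) : 0 ≤ gammaZeroX s := by
  have hroot : gammaZeroRoot s ^ 2 ≤ 1 :=
    (sq_le_one_iff_abs_le_one _).mpr (abs_gammaZeroRoot_le_one hs)
  linarith [one_sub_gammaZeroX hs']

theorem gammaZeroX_lt_one (hs : s ≤ 1 / 3) (hs' : s ≠ -1) : gammaZeroX s < 1 := by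
  rw [← sub_pos, one_sub_gammaZeroX hs]
  exact sq_pos_of_ne_zero (gammaZeroRoot_ne_zero hs hs')

theorem scaledTangentialPressure_gammaZeroX (hs : s ≤ 1 / 3) (hs' : s ≠ -1) :
    scaledTangentialPressure (gammaZeroX s) s =
      s + 4 * (1 / 3 + Real.sqrt (1 / 9 - s / 3)) ^ 2 := by
  rw [scaledTangentialPressure_eq_of_one_sub_eq_sq (gammaZeroRoot_ne_zero hs hs')
    (one_sub_gammaZeroX hs) (three_mul_gammaZeroRoot_sq_add_one_add hs), gammaZeroRoot]
  ring

theorem sixteen_ninths_le_four_mul_sq (hs : s ≤ 0) :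
    16 / 9 ≤ 4 * (1 / 3 + Real.sqrt (1 / 9 - s / 3)) ^ 2 := by
  have hsqrt : 1 / 3 ≤ Real.sqrt (1 / 9 - s / 3) := Real.le_sqrt_of_sq_le (by linarith)
  calc (16 / 9 : ℝ) = 4 * (1 / 3 + 1 / 3) ^ 2 := by norm_num
    _ ≤ 4 * (1 / 3 + Real.sqrt (1 / 9 - s / 3)) ^ 2 := by gcongr

end GammaZero

theorem pT_positive_along_gamma0_general (s : ℝ) (hs : -(16 / 9) < s) (hs_ne : s ≠ -1)
    (hs0 : s ≤ 0) :
    0 ≤ gammaZeroX s ∧ gammaZeroX s < 1 ∧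
    scaledTangentialPressure (gammaZeroX s) s =
      s + 4 * (1 / 3 + Real.sqrt (1 / 9 - s / 3)) ^ 2 ∧
    s + 16 / 9 ≤ s + 4 * (1 / 3 + Real.sqrt (1 / 9 - s / 3)) ^ 2 ∧
    0 < s + 16 / 9 := by
  have hs_le : s ≤ 1 / 3 := by linarith
  exact ⟨gammaZeroX_nonneg (by linarith) hs_le, gammaZeroX_lt_one hs_le hs_ne,
    scaledTangentialPressure_gammaZeroX hs_le hs_ne,
    by linarith [sixteen_ninths_le_four_mul_sq hs0], by linarith⟩

/-- **Positivity of the tangential pressure term along `γ₀`**: for every real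
`s` with `−1 < s ≤ 0`, setting `x = (4 + 3s)/9 + (4/3)√(1/9 − s/3)`, one has
`0 ≤ x < 1` and
`s + (x + s)²/(4(1 − x)) = s + 4(1/3 + √(1/9 − s/3))² ≥ s + 16/9 > 0`. -/
theorem pT_positive_along_gamma0 (s : ℝ) (hs1 : -1 < s) (hs0 : s ≤ 0) :
    0 ≤ (4 + 3 * s) / 9 + (4 / 3) * Real.sqrt (1 / 9 - s / 3) ∧
    (4 + 3 * s) / 9 + (4 / 3) * Real.sqrt (1 / 9 - s / 3) < 1 ∧
    s + ((4 + 3 * s) / 9 + (4 / 3) * Real.sqrt (1 / 9 - s / 3) + s) ^ 2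
        / (4 * (1 - ((4 + 3 * s) / 9 + (4 / 3) * Real.sqrt (1 / 9 - s / 3))))
      = s + 4 * (1 / 3 + Real.sqrt (1 / 9 - s / 3)) ^ 2 ∧
    s + 16 / 9 ≤ s + 4 * (1 / 3 + Real.sqrt (1 / 9 - s / 3)) ^ 2 ∧
    0 < s + 16 / 9 :=
  pT_positive_along_gamma0_general s (by linarith) hs1.ne' hs0
end

section
/- Fundamental derivative identity from the TOV equation: let m_g, p, q, μ, ρ, p_T : (0,∞) → ℝ be differentiable and define λ by e^{−2λ(r)} = 1 − 2m_g(r)/r + q(r)²/r², assumed positive for all r > 0. Suppose for all r > 0: μ'(r) = (m_g(r)/r² + 4πr p(r) − q(r)²/r³)e^{2λ(r)}, m_g'(r) = 4πr²ρ(r) + q(r)q'(r)/r, and p'(r) = q(r)q'(r)/(4πr⁴) + (2/r)(p_T(r) − p(r)) − (ρ(r) + p(r))e^{2λ(r)}(m_g(r)/r² + 4πr p(r) − q(r)²/r³). Then the function ψ(r) := (m_g(r) + 4πr³p(r) − q(r)²/r)e^{(μ+λ)(r)} satisfies ψ'(r) = e^{(μ+λ)(r)}(4πr²(ρ(r) +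 p(r) + 2p_T(r)) + q(r)²/r²) for all r > 0. -/
noncomputable section

open Real

/-- The metric coefficient `λ` defined by `e^{−2λ} = 1 − 2m_g/r + q²/r²`. -/
def lamOf (mg q : ℝ → ℝ) (r : ℝ) : ℝ :=
  -Real.log (1 - 2 * mg r / r + (q r) ^ 2 / r ^ 2) / 2

/-!
Write `A = m_g + 4πr³p − q²/r`, so that `ψ = A e^{μ+λ}`. The equations for `μ'` and `m_g'` give
`(μ + λ)' = 4πr(ρ + p)e^{2λ}`: the terms in `m_g` and `q` cancel. Since `m_g/r² + 4πrp − q²/r³` is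
`A/r²`, the TOV equation becomes the linear equation `A' = S − 4πr(ρ + p)e^{2λ} A` with
`S = 4πr²(ρ + p + 2p_T) + q²/r²`. Hence `e^{μ+λ}` is an integrating factor, and
`(A e^{μ+λ})' = e^{μ+λ} S`.
-/

/-- The quantity `e^{−2λ} = 1 − 2m_g/r + q²/r²`, the reciprocal of the radial metric coefficient. -/
def metricFactor (mg q : ℝ → ℝ) (r : ℝ) : ℝ :=
  1 - 2 * mg r / r + (q r) ^ 2 / r ^ 2

/-- The quantity `m_g + 4πr³p − q²/r`, which acts as the source mass in the equation
`μ' = (m_g + 4πr³p − q²/r) e^{2λ} / r²`. -/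
def effectiveMass (mg p q : ℝ → ℝ) (r : ℝ) : ℝ :=
  mg r + 4 * π * r ^ 3 * p r - (q r) ^ 2 / r

theorem hasDerivAt_mul_exp_of_linear {A φ : ℝ → ℝ} {S c r : ℝ}
    (hA : HasDerivAt A (S - c * A r) r) (hφ : HasDerivAt φ c r) :
    HasDerivAt (fun t => A t * exp (φ t)) (exp (φ r) * S) r :=
  (hA.fun_mul hφ.exp).congr_deriv (by ring)

section

variable {mg p q mu : ℝ → ℝ} {mg' p' q' rho pT E r : ℝ}

theorem exp_two_mul_lamOf (hpos : 0 < metricFactor mg q r) :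
    exp (2 * lamOf mg q r) = (metricFactor mg q r)⁻¹ := by
  have two_mul_lamOf : 2 * lamOf mg q r = -log (metricFactor mg q r) := by
    simp only [lamOf, metricFactor]
    ring
  rw [two_mul_lamOf, exp_neg, exp_log hpos]

theorem hasDerivAt_metricFactor (hr : r ≠ 0) (hmg : HasDerivAt mg mg' r)
    (hq : HasDerivAt q q' r) :
    HasDerivAt (metricFactor mg q)
      (-2 * (mg' / r - mg r / r ^ 2 - q r * q' / r ^ 2 + (q r) ^ 2 / r ^ 3)) r := by
  have hid := hasDerivAt_id' r
  have hmass := (hmg.const_mul 2).fun_div hid hr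
  have hcharge := (hq.fun_pow 2).fun_div (hid.fun_pow 2) (pow_ne_zero 2 hr)
  refine ((hmass.const_sub 1).fun_add hcharge).congr_deriv ?_
  field_simp
  ring

theorem hasDerivAt_lamOf (hr : r ≠ 0) (hpos : 0 < metricFactor mg q r)
    (hmg : HasDerivAt mg mg' r) (hq : HasDerivAt q q' r) :
    HasDerivAt (lamOf mg q)
      ((mg' / r - mg r / r ^ 2 - q r * q' / r ^ 2 + (q r) ^ 2 / r ^ 3)
        * exp (2 * lamOf mg q r)) r := by
  have hlog := (hasDerivAt_metricFactor hr hmg hq).log hpos.ne'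
  refine (hlog.fun_neg.div_const 2).congr_deriv ?_
  rw [exp_two_mul_lamOf hpos]
  ring

theorem hasDerivAt_mu_add_lamOf (hr : r ≠ 0) (hpos : 0 < metricFactor mg q r)
    (hq : HasDerivAt q q' r)
    (hmu : HasDerivAt mu ((mg r / r ^ 2 + 4 * π * r * p r - (q r) ^ 2 / r ^ 3)
      * exp (2 * lamOf mg q r)) r)
    (hmg : HasDerivAt mg (4 * π * r ^ 2 * rho + q r * q' / r) r) :
    HasDerivAt (fun t => mu t + lamOf mg q t)
      (4 * π * r * (rho + p r) * exp (2 * lamOf mg q r)) r := by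
  refine (hmu.fun_add (hasDerivAt_lamOf hr hpos hmg hq)).congr_deriv ?_
  field_simp
  ring

theorem effectiveMass_div_sq (hr : r ≠ 0) :
    effectiveMass mg p q r / r ^ 2
      = mg r / r ^ 2 + 4 * π * r * p r - (q r) ^ 2 / r ^ 3 := by
  unfold effectiveMass
  field_simp

theorem hasDerivAt_effectiveMass (hr : r ≠ 0) (hmg : HasDerivAt mg mg' r)
    (hp : HasDerivAt p p' r) (hq : HasDerivAt q q' r) :
    HasDerivAt (effectiveMass mg p q)
      (mg' + 12 * π * r ^ 2 * p r + 4 * π * r ^ 3 * p' - 2 * q r * q' / r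
        + (q r) ^ 2 / r ^ 2) r := by
  have hid := hasDerivAt_id' r
  have hpressure := ((hid.fun_pow 3).const_mul (4 * π)).fun_mul hp
  have hcharge := (hq.fun_pow 2).fun_div hid hr
  refine ((hmg.fun_add hpressure).fun_sub hcharge).congr_deriv ?_
  field_simp
  ring

theorem hasDerivAt_effectiveMass_of_tov (hr : r ≠ 0) (hq : HasDerivAt q q' r)
    (hmg : HasDerivAt mg (4 * π * r ^ 2 * rho + q r * q' / r) r)
    (hp : HasDerivAt p (q r * q' / (4 * π * r ^ 4) + (2 / r) * (pT - p r)
      - (rho + p r) * E * (mg r / r ^ 2 + 4 * π * r * p r - (q r) ^ 2 / r ^ 3)) r) :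
    HasDerivAt (effectiveMass mg p q)
      (4 * π * r ^ 2 * (rho + p r + 2 * pT) + (q r) ^ 2 / r ^ 2
        - 4 * π * r * (rho + p r) * E * effectiveMass mg p q r) r := by
  rw [← effectiveMass_div_sq hr] at hp
  refine (hasDerivAt_effectiveMass hr hmg hp hq).congr_deriv ?_
  field_simp
  ring

theorem fundamental_derivative_identity_general (hr : r ≠ 0)
    (hpos : 0 < 1 - 2 * mg r / r + (q r) ^ 2 / r ^ 2)
    (hq : HasDerivAt q q' r)
    (hmu : HasDerivAt mu ((mg r / r ^ 2 + 4 * π * r * p r - (q r) ^ 2 / r ^ 3)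
      * exp (2 * lamOf mg q r)) r)
    (hmg : HasDerivAt mg (4 * π * r ^ 2 * rho + q r * q' / r) r)
    (hTOV : HasDerivAt p (q r * q' / (4 * π * r ^ 4) + (2 / r) * (pT - p r)
      - (rho + p r) * exp (2 * lamOf mg q r)
        * (mg r / r ^ 2 + 4 * π * r * p r - (q r) ^ 2 / r ^ 3)) r) :
    HasDerivAt (fun t => (mg t + 4 * π * t ^ 3 * p t - (q t) ^ 2 / t)
        * exp (mu t + lamOf mg q t))
      (exp (mu r + lamOf mg q r)
        * (4 * π * r ^ 2 * (rho + p r + 2 * pT) + (q r) ^ 2 / r ^ 2)) r :=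
  hasDerivAt_mul_exp_of_linear (hasDerivAt_effectiveMass_of_tov hr hq hmg hTOV)
    (hasDerivAt_mu_add_lamOf hr hpos hq hmu hmg)

end

/-- **Fundamental derivative identity from the TOV equation**: let
`m_g, p, q, μ, ρ, p_T` be differentiable on `(0,∞)` and let `λ` be defined by
`e^{−2λ} = 1 − 2m_g/r + q²/r²` (assumed positive). If
`μ' = (m_g/r² + 4πrp − q²/r³)e^{2λ}`, `m_g' = 4πr²ρ + qq'/r` and the TOV
equation holds, then `ψ = (m_g + 4πr³p − q²/r)e^{μ+λ}` satisfies
`ψ' = e^{μ+λ}(4πr²(ρ + p + 2p_T) + q²/r²)` for all `r > 0`. -/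
theorem fundamental_derivative_identity (mg p q mu rho pT : ℝ → ℝ)
    (hmg : ∀ r > 0, DifferentiableAt ℝ mg r)
    (hp : ∀ r > 0, DifferentiableAt ℝ p r)
    (hq : ∀ r > 0, DifferentiableAt ℝ q r)
    (hmu : ∀ r > 0, DifferentiableAt ℝ mu r)
    (hrho : ∀ r > 0, DifferentiableAt ℝ rho r)
    (hpT : ∀ r > 0, DifferentiableAt ℝ pT r)
    (hpos : ∀ r > 0, 0 < 1 - 2 * mg r / r + (q r) ^ 2 / r ^ 2)
    (hmu' : ∀ r > 0, deriv mu r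
      = (mg r / r ^ 2 + 4 * π * r * p r - (q r) ^ 2 / r ^ 3)
          * Real.exp (2 * lamOf mg q r))
    (hmg' : ∀ r > 0, deriv mg r
      = 4 * π * r ^ 2 * rho r + q r * deriv q r / r)
    (hTOV : ∀ r > 0, deriv p r
      = q r * deriv q r / (4 * π * r ^ 4) + (2 / r) * (pT r - p r)
        - (rho r + p r) * Real.exp (2 * lamOf mg q r)
            * (mg r / r ^ 2 + 4 * π * r * p r - (q r) ^ 2 / r ^ 3)) :
    ∀ r > 0,
      deriv (fun t => (mg t + 4 * π * t ^ 3 * p t - (q t) ^ 2 / t)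
          * Real.exp (mu t + lamOf mg q t)) r
        = Real.exp (mu r + lamOf mg q r)
            * (4 * π * r ^ 2 * (rho r + p r + 2 * pT r)
                + (q r) ^ 2 / r ^ 2) := by
  intro r hr
  exact (fundamental_derivative_identity_general hr.ne' (hpos r hr) (hq r hr).hasDerivAt
    (hmu' r hr ▸ (hmu r hr).hasDerivAt) (hmg' r hr ▸ (hmg r hr).hasDerivAt)
    (hTOV r hr ▸ (hp r hr).hasDerivAt)).deriv
end
end

section
/- Final algebraic step in the thin-shell limit: let R > 0, M > 0 and Q ≥ 0 be real numbers with Q² < MR, and suppose D := 1 − 2M/R + Q²/R² satisfies D ≥ 0 and M − Q²/R = 2R√D(1 − √D). Then (3M − Q²/R)² = 4MR, and consequently √M = √R/3 + √(R/9 + Q²/(3R)). -/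
/-!
Write `s = √D` and `q = Q² / R`. Since `R s² = R - 2M + q`, the `s²` term of the limit relation
`M - q = 2Rs(1 - s)` can be eliminated, which leaves `2Rs = 2R - (3M - q)`, linear in `s`. Squaring
and eliminating `s²` once more gives `(3M - q)² = 4MR`. As `q ≤ 3M`, this is `3M - q = 2√M√R`, a
quadratic equation for `√M` whose roots have product `-q / 3 ≤ 0`, so that `√M > 0` is the larger
root.
-/

theorem mul_one_sub_two_mul_div_add_sq_div_sq {K : Type*} [Field K] {R : K} (hR : R ≠ 0)
    (M Q : K) : R * (1 - 2 * M / R + Q ^ 2 / R ^ 2) = R - 2 * M + Q ^ 2 / R := by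
  field_simp

theorem sq_three_mul_sub_eq_four_mul_mul {A : Type*} [CommRing A] {R M q s : A}
    (hs : R * s ^ 2 = R - 2 * M + q) (h : M - q = 2 * R * s * (1 - s)) :
    (3 * M - q) ^ 2 = 4 * M * R := by
  have linear_in_s : 2 * R * s = 2 * R - (3 * M - q) := by
    linear_combination 2 * hs - h
  have squared : (2 * R - (3 * M - q)) ^ 2 = 4 * R * (R - 2 * M + q) := by
    rw [← linear_in_s, ← hs]
    ring
  linear_combination squared

theorem three_mul_sub_eq_two_mul_sqrt_mul_sqrt {R M q : ℝ} (hM : 0 ≤ M) (hq : q ≤ 3 * M)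
    (h : (3 * M - q) ^ 2 = 4 * M * R) : 3 * M - q = 2 * (√M * √R) := by
  calc 3 * M - q = √((3 * M - q) ^ 2) := (Real.sqrt_sq (sub_nonneg.2 hq)).symm
    _ = √(2 ^ 2 * (M * R)) := by rw [h]; ring_nf
    _ = 2 * (√M * √R) := by
      rw [Real.sqrt_mul (by positivity), Real.sqrt_sq zero_le_two, Real.sqrt_mul hM]

theorem eq_add_sqrt_of_sq_sub_eq {x b c : ℝ} (hb : b ≤ x) (h : (x - b) ^ 2 = c) :
    x = b + √c := by
  rw [← h, Real.sqrt_sq (sub_nonneg.2 hb), add_sub_cancel]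

theorem two_mul_le_three_mul_of_three_mul_sq_sub_eq {A : Type*} [CommRing A] [LinearOrder A]
    [IsStrictOrderedRing A] {x r q : A} (hx : 0 < x) (hq : 0 ≤ q)
    (h : 3 * x ^ 2 - q = 2 * (x * r)) : 2 * r ≤ 3 * x := by
  have factored : x * (3 * x - 2 * r) = q := by linear_combination h
  exact sub_nonneg.1 (nonneg_of_mul_nonneg_right (factored ▸ hq) hx)

theorem sqrt_eq_sqrt_div_three_add_sqrt {R M q : ℝ} (hR : 0 ≤ R) (hM : 0 < M) (hq₀ : 0 ≤ q)
    (hq : q ≤ 3 * M) (h : (3 * M - q) ^ 2 = 4 * M * R) :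
    √M = √R / 3 + √(R / 9 + q / 3) := by
  have quadratic : 3 * √M ^ 2 - q = 2 * (√M * √R) := by
    rw [Real.sq_sqrt hM.le]
    exact three_mul_sub_eq_two_mul_sqrt_mul_sqrt hM.le hq h
  have two_mul_sqrt_le : 2 * √R ≤ 3 * √M :=
    two_mul_le_three_mul_of_three_mul_sq_sub_eq (Real.sqrt_pos.2 hM) hq₀ quadratic
  apply eq_add_sqrt_of_sq_sub_eq
  · linarith [Real.sqrt_nonneg R]
  · linear_combination quadratic / 3 + Real.sq_sqrt hR / 9

/-- **Final algebraic step in the thin-shell limit**: let `R > 0`, `M > 0`,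
`Q ≥ 0` with `Q² < MR`, and suppose `D = 1 − 2M/R + Q²/R²` satisfies `D ≥ 0`
and `M − Q²/R = 2R√D(1 − √D)`. Then `(3M − Q²/R)² = 4MR` and consequently
`√M = √R/3 + √(R/9 + Q²/(3R))`. -/
theorem thin_shell_algebraic_step (R M Q : ℝ) (hR : 0 < R) (hM : 0 < M)
    (hQ : 0 ≤ Q) (hQM : Q ^ 2 < M * R)
    (hD : 0 ≤ 1 - 2 * M / R + Q ^ 2 / R ^ 2)
    (heq : M - Q ^ 2 / R
      = 2 * R * Real.sqrt (1 - 2 * M / R + Q ^ 2 / R ^ 2)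
          * (1 - Real.sqrt (1 - 2 * M / R + Q ^ 2 / R ^ 2))) :
    (3 * M - Q ^ 2 / R) ^ 2 = 4 * M * R ∧
    Real.sqrt M = Real.sqrt R / 3 + Real.sqrt (R / 9 + Q ^ 2 / (3 * R)) := by
  have sq_eq : (3 * M - Q ^ 2 / R) ^ 2 = 4 * M * R := by
    refine sq_three_mul_sub_eq_four_mul_mul ?_ heq
    rw [Real.sq_sqrt hD, mul_one_sub_two_mul_div_add_sq_div_sq hR.ne']
  have charge_le : Q ^ 2 / R ≤ 3 * M := by
    have : Q ^ 2 / R < M := (div_lt_iff₀ hR).2 hQM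
    linarith
  refine ⟨sq_eq, ?_⟩
  rw [mul_comm 3 R, ← div_div]
  exact sqrt_eq_sqrt_div_three_add_sqrt hR.le hM (by positivity) charge_le sq_eq
end
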